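/- arXiv:2312.09083 — 3 statements merged into one kernel-verified Lean document; each statement's English description precedes it below -/
import Mathlib

section
/- Let n ≥ 1, G ∈ 𝒢_{n,1}, Σ a topological space, and μ a Borel probability measure on Σ. Then the set 𝕍_*(G) of compliant pairs satisfying the averaged-controllability rank criterion is an open subset of 𝕍(G) in the uniform topology. -/
open MeasureTheory BoundedContinuousFunction

/-- Node type: `none` is the control node `β`, `some i` is the state node `α_i`. -/
abbrev Node (n : ℕ) := Option (Fin n)

/-- The set `𝕍(G)` of compliant pairs, inside the product of the spaces of bounded
continuous matrix- and vector-valued functions on `S` (each with the uniform topology). -/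
def VG (n : ℕ) (E : Set (Node n × Node n)) (S : Type*) [TopologicalSpace S] :
    Set ((S →ᵇ (Fin n → Fin n → ℝ)) × (S →ᵇ (Fin n → ℝ))) :=
  {p | (∀ σ (i j : Fin n), ((some j : Node n), (some i : Node n)) ∉ E → p.1 σ i j = 0) ∧
       (∀ σ (i : Fin n), ((none : Node n), (some i : Node n)) ∉ E → p.2 σ i = 0)}

/-- The averaged-controllability rank criterion for a pair in `𝕍(G)`. -/
def RankCriterionB {n : ℕ} {S : Type*} [TopologicalSpace S] [MeasurableSpace S]
    (μ : Measure S) (p : (S →ᵇ (Fin n → Fin n → ℝ)) × (S →ᵇ (Fin n → ℝ))) : Prop :=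
  Submodule.span ℝ {x : Fin n → ℝ |
    ∃ k : ℕ, x = ∫ σ, (Matrix.of (p.1 σ) ^ k).mulVec (p.2 σ) ∂μ} = ⊤

def WeaklyConnected {V : Type*} (E : Set (V × V)) : Prop :=
  ∀ u v : V, ∃ (k : ℕ) (w : ℕ → V), w 0 = u ∧ w k = v ∧
    ∀ t < k, (w t, w (t + 1)) ∈ E ∨ (w (t + 1), w t) ∈ E

/-- Membership in the class `𝒢_{n,1}`. -/
def MemG (n : ℕ) (E : Set (Node n × Node n)) : Prop :=
  (∀ e ∈ E, e.2 ≠ (none : Node n)) ∧ WeaklyConnected E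

/-!
The rank criterion asks that a sequence of vectors of `ℝⁿ` spans. A spanning sequence contains a
basis, and the finitely many vectors of that basis remain linearly independent, hence a basis, under
small perturbations; so spanning is an open condition, even for the topology of pointwise
convergence of sequences. By dominated convergence each vector `∫ Aᵏ b ∂μ` depends continuously on
`(A, b)` in the uniform topology: all pairs close to a given one take their values in a common
compact set, on which `(A, b) ↦ Aᵏ b` is bounded.
-/

section Span

variable {𝕜 E ι : Type*} [NontriviallyNormedField 𝕜] [CompleteSpace 𝕜]
  [NormedAddCommGroup E] [NormedSpace 𝕜 E] [FiniteDimensional 𝕜 E]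

theorem isOpen_setOfPred_span_range_eq_top :
    IsOpen {v : ι → E | Submodule.span 𝕜 (Set.range v) = ⊤} := by
  refine isOpen_iff_mem_nhds.2 fun v₀ hv₀ => ?_
  obtain ⟨κ, a, -, hspan, hli⟩ := exists_linearIndependent' 𝕜 v₀
  have : Finite κ := hli.finite
  have := Fintype.ofFinite κ
  have hcard : Fintype.card κ = Module.finrank 𝕜 E := by
    rw [← finrank_span_eq_card hli, hspan, hv₀, finrank_top]
  have hrestrict : Continuous fun v : ι → E => v ∘ a :=
    continuous_pi fun i => continuous_apply (a i)
  filter_upwards [hrestrict.continuousAt.eventually hli.eventually] with v hv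
  exact top_unique <| (hv.span_eq_top_of_card_eq_finrank' hcard).ge.trans <|
    Submodule.span_mono (Set.range_comp_subset_range a v)

end Span

section Integral

open Metric
open scoped Topology

variable {S E F G : Type*} [TopologicalSpace S]
  [PseudoMetricSpace E] [ProperSpace E] [PseudoMetricSpace F] [ProperSpace F]
  [NormedAddCommGroup G]

theorem exists_isCompact_eventually_forall_mem (f₀ : S →ᵇ E) :
    ∃ K : Set E, IsCompact K ∧ ∀ᶠ f in 𝓝 f₀, ∀ σ, f σ ∈ K := by
  refine ⟨cthickening 1 (Set.range f₀),
    isCompact_of_isClosed_isBounded isClosed_cthickening f₀.isBounded_range.cthickening, ?_⟩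
  filter_upwards [closedBall_mem_nhds f₀ one_pos] with f hf σ
  exact mem_cthickening_of_dist_le _ _ _ _ (Set.mem_range_self σ)
    ((dist_coe_le_dist σ).trans hf)

theorem exists_eventually_forall_norm_comp_le {φ : E × F → G} (hφ : Continuous φ)
    (p₀ : (S →ᵇ E) × (S →ᵇ F)) :
    ∃ C, ∀ᶠ p in 𝓝 p₀, ∀ σ, ‖φ (p.1 σ, p.2 σ)‖ ≤ C := by
  obtain ⟨K, hK, hpK⟩ := exists_isCompact_eventually_forall_mem p₀.1
  obtain ⟨L, hL, hpL⟩ := exists_isCompact_eventually_forall_mem p₀.2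
  obtain ⟨C, hC⟩ := (hK.prod hL).exists_bound_of_continuousOn hφ.continuousOn
  refine ⟨C, ?_⟩
  filter_upwards [continuousAt_fst.eventually hpK, continuousAt_snd.eventually hpL]
    with p hp₁ hp₂ σ
  exact hC _ ⟨hp₁ σ, hp₂ σ⟩

theorem continuous_integral_comp_prodMk [NormedSpace ℝ G] [MeasurableSpace S]
    [OpensMeasurableSpace S] (μ : Measure S) [IsFiniteMeasure μ]
    {φ : E × F → G} (hφ : Continuous φ) :
    Continuous fun p : (S →ᵇ E) × (S →ᵇ F) => ∫ σ, φ (p.1 σ, p.2 σ) ∂μ := by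
  refine continuous_iff_continuousAt.2 fun p₀ => ?_
  obtain ⟨C, hC⟩ := exists_eventually_forall_norm_comp_le hφ p₀
  have hmeas (p : (S →ᵇ E) × (S →ᵇ F)) :
      AEStronglyMeasurable (fun σ => φ (p.1 σ, p.2 σ)) μ :=
    hφ.comp_aestronglyMeasurable
      (p.1.continuous.aestronglyMeasurable.prodMk p.2.continuous.aestronglyMeasurable)
  have hcont (σ : S) : Continuous fun p : (S →ᵇ E) × (S →ᵇ F) => φ (p.1 σ, p.2 σ) :=
    hφ.comp (((continuous_eval_const σ).comp continuous_fst).prodMk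
      ((continuous_eval_const σ).comp continuous_snd))
  exact continuousAt_of_dominated (.of_forall hmeas)
    (hC.mono fun _ hp => .of_forall hp) (integrable_const C)
    (.of_forall fun σ => (hcont σ).continuousAt)

end Integral

section RankCriterion

variable {n : ℕ} {S : Type*} [TopologicalSpace S] [MeasurableSpace S]

/-- The averaged Krylov vectors `∫ Aᵏ b ∂μ`, `k ∈ ℕ`, of a pair `(A, b)`. The rank criterion says
that they span `ℝⁿ`; as a family indexed by `k`, they live in a space with the product topology. -/
noncomputable def averagedKrylov (μ : Measure S)
    (p : (S →ᵇ (Fin n → Fin n → ℝ)) × (S →ᵇ (Fin n → ℝ))) (k : ℕ) : Fin n → ℝ :=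
  ∫ σ, (Matrix.of (p.1 σ) ^ k).mulVec (p.2 σ) ∂μ

theorem rankCriterionB_iff (μ : Measure S)
    (p : (S →ᵇ (Fin n → Fin n → ℝ)) × (S →ᵇ (Fin n → ℝ))) :
    RankCriterionB μ p ↔ Submodule.span ℝ (Set.range (averagedKrylov μ p)) = ⊤ := by
  simp only [RankCriterionB, averagedKrylov, Set.range, eq_comm]

variable [OpensMeasurableSpace S] (μ : Measure S) [IsFiniteMeasure μ]

theorem continuous_averagedKrylov : Continuous (averagedKrylov (n := n) μ) := by
  refine continuous_pi fun k => ?_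
  have hof : Continuous fun q : (Fin n → Fin n → ℝ) × (Fin n → ℝ) => Matrix.of q.1 :=
    continuous_fst
  exact continuous_integral_comp_prodMk μ ((hof.pow k).matrix_mulVec continuous_snd)

theorem stmt2_general :
    IsOpen {p : (S →ᵇ (Fin n → Fin n → ℝ)) × (S →ᵇ (Fin n → ℝ)) | RankCriterionB μ p} := by
  simp only [rankCriterionB_iff]
  exact isOpen_setOfPred_span_range_eq_top.preimage (continuous_averagedKrylov μ)

end RankCriterion

/-- the set `𝕍_*(G)` of averaged-controllable compliant pairs is open
in `𝕍(G)` for the uniform topology. -/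
theorem stmt2 {n : ℕ} (hn : 1 ≤ n) (E : Set (Node n × Node n)) (hG : MemG n E)
    (S : Type*) [TopologicalSpace S] [MeasurableSpace S] [BorelSpace S]
    (μ : Measure S) [IsProbabilityMeasure μ] :
    IsOpen {q : ↥(VG n E S) | RankCriterionB μ q.val} :=
  (stmt2_general μ).preimage continuous_subtype_val
end

section
/- Let n ≥ 1 and let G ∈ 𝒢_{n,1} be such that its core G* does not contain a directed spanning path. Then for every topological space Σ, every Borel probability measure μ on Σ, and every compliant pair (A, b) ∈ 𝕍(G), the ℝ-linear span of { ∫_Σ A(σ)^k b(σ) dμ(σ) : k ∈ ℕ } is a proper subspace of ℝⁿ; in particular, no compliant pair satisfies the averaged-controllability rank criterion. -/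
/-!
If the `i`-th entry of `A(σ)^k b(σ)` is nonzero, its expansion contains a nonzero monomial, which
traces a walk of length `k + 1` from `β` to `α_i`. A walk ending in the core cannot repeat a node,
since a repeated node would put its end downstream of a cycle; hence it is a path inside the core.
Let `c` be the number of `α`-nodes of the core. The core has `c + 1` nodes, because `β`, having no
incoming edge, belongs to it. Such a path has `k + 2` nodes, and it has fewer than `c + 1` because
it does not span. So only the first `c - 1` moments can have a nonzero projection to the `c`
coordinates of the core, and these are too few to span.
-/

open MeasureTheory

/-- `w` is a walk of length `k` from `u` to `v` in the digraph with edge set `E`. -/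
def IsWalk {V : Type*} (E : Set (V × V)) (k : ℕ) (w : ℕ → V) (u v : V) : Prop :=
  w 0 = u ∧ w k = v ∧ ∀ t < k, (w t, w (t + 1)) ∈ E

/-- A path is a walk with no repeated node. -/
def IsPath {V : Type*} (E : Set (V × V)) (k : ℕ) (w : ℕ → V) (u v : V) : Prop :=
  IsWalk E k w u v ∧ ∀ s ≤ k, ∀ t ≤ k, w s = w t → s = t

/-- A cycle of length `k ≥ 1` from `u` to itself, all nodes pairwise distinct except
the coinciding endpoints. -/
def IsCycle {V : Type*} (E : Set (V × V)) (k : ℕ) (w : ℕ → V) (u : V) : Prop :=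
  1 ≤ k ∧ IsWalk E k w u u ∧ ∀ s < k, ∀ t < k, w s = w t → s = t

def Reachable {V : Type*} (E : Set (V × V)) (u v : V) : Prop :=
  ∃ k w, IsWalk E k w u v

/-- `u` lies on a cycle of the digraph. -/
def OnCycle {V : Type*} (E : Set (V × V)) (u : V) : Prop :=
  ∃ k w, IsCycle E k w u

/-- `V⁺_cyc`: nodes reachable by a walk from some node lying on a cycle. -/
def CycSucc {V : Type*} (E : Set (V × V)) : Set V :=
  {v | ∃ u, OnCycle E u ∧ Reachable E u v}

/-- The node set of the core relative to a node set `N`: `N \ V⁺_cyc`. -/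
def CoreOn {W : Type*} (N : Set W) (F : Set (W × W)) : Set W := N \ CycSucc F

/-- The node set `V*` of the core `G*` of `G`. -/
def CoreNodes (n : ℕ) (E : Set (Node n × Node n)) : Set (Node n) :=
  CoreOn Set.univ E

/-- The core of `G` contains a directed spanning path: a path of `G` whose node set
is exactly `V*`. -/
def HasCoreSpanningPath (n : ℕ) (E : Set (Node n × Node n)) : Prop :=
  ∃ (k : ℕ) (w : ℕ → Node n) (u v : Node n), IsPath E k w u v ∧
    {x | ∃ t ≤ k, w t = x} = CoreNodes n E

/-- A compliant pair `(A, b) ∈ 𝕍(G)`: bounded continuous, with the sparsity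
pattern dictated by the edge set `E`. -/
def Compliant {n : ℕ} {S : Type*} [TopologicalSpace S] (E : Set (Node n × Node n))
    (A : S → Fin n → Fin n → ℝ) (b : S → Fin n → ℝ) : Prop :=
  Continuous A ∧ Continuous b ∧
  (∃ C, ∀ σ i j, |A σ i j| ≤ C) ∧ (∃ C, ∀ σ i, |b σ i| ≤ C) ∧
  (∀ σ (i j : Fin n), ((some j : Node n), (some i : Node n)) ∉ E → A σ i j = 0) ∧
  (∀ σ (i : Fin n), ((none : Node n), (some i : Node n)) ∉ E → b σ i = 0)

/-- The averaged-controllability rank criterion: the span of the Bochner integrals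
`∫ A(σ)^k b(σ) dμ`, `k ∈ ℕ`, is all of `ℝⁿ`. -/
def RankCriterion {n : ℕ} {S : Type*} [MeasurableSpace S]
    (μ : Measure S) (A : S → Fin n → Fin n → ℝ) (b : S → Fin n → ℝ) : Prop :=
  Submodule.span ℝ {x : Fin n → ℝ |
    ∃ k : ℕ, x = ∫ σ, (Matrix.of (A σ) ^ k).mulVec (b σ) ∂μ} = ⊤

/-- `S` is a topological manifold of dimension `d`. -/
def IsTopManifold (d : ℕ) (S : Type*) [TopologicalSpace S] : Prop :=
  ∀ x : S, ∃ U : Set S, IsOpen U ∧ x ∈ U ∧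
    ∃ W : Set (EuclideanSpace ℝ (Fin d)), IsOpen W ∧ Nonempty (↥U ≃ₜ ↥W)

/-- The support of `μ` contains a nonempty open set. -/
def SupportHasOpen {S : Type*} [TopologicalSpace S] [MeasurableSpace S]
    (μ : Measure S) : Prop :=
  ∃ U : Set S, IsOpen U ∧ U.Nonempty ∧ ∀ W ⊆ U, IsOpen W → W.Nonempty → 0 < μ W

section Walks

variable {V : Type*} {E : Set (V × V)} {k : ℕ} {w : ℕ → V} {u v x : V}

theorem isWalk_zero (E : Set (V × V)) (u : V) : IsWalk E 0 (fun _ => u) u u :=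
  ⟨rfl, rfl, by simp⟩

theorem IsWalk.snoc (hw : IsWalk E k w u v) (hvx : (v, x) ∈ E) :
    IsWalk E (k + 1) (Function.update w (k + 1) x) u x := by
  obtain ⟨hstart, hend, hedge⟩ := hw
  refine ⟨by simpa using hstart, by simp, fun t ht => ?_⟩
  rcases (Nat.lt_succ_iff.1 ht).lt_or_eq with htk | rfl
  · simpa [Function.update_of_ne, htk.ne, ht.ne] using hedge t htk
  · simpa [hend] using hvx

theorem IsWalk.segment (hw : IsWalk E k w u v) {s t : ℕ} (hst : s ≤ t) (htk : t ≤ k) :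
    IsWalk E (t - s) (fun r => w (s + r)) (w s) (w t) :=
  ⟨rfl, congrArg w (Nat.add_sub_of_le hst), fun r hr => hw.2.2 (s + r) (by lia)⟩

theorem IsWalk.closed_segment (hw : IsWalk E k w u v) {s t : ℕ} (hst : s ≤ t) (htk : t ≤ k)
    (heq : w s = w t) : IsWalk E (t - s) (fun r => w (s + r)) (w s) (w s) := by
  simpa only [← heq] using hw.segment hst htk

theorem IsWalk.length_eq_zero (hw : IsWalk E k w u v) (hv : ∀ e ∈ E, e.2 ≠ v) : k = 0 := by
  cases k with
  | zero => rfl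
  | succ k => exact absurd hw.2.1 (hv _ (hw.2.2 k k.lt_succ_self))

theorem notMem_cycSucc_of_forall_snd_ne (hv : ∀ e ∈ E, e.2 ≠ v) : v ∉ CycSucc E := by
  rintro ⟨u, ⟨k, c, hk, hcycle, -⟩, l, w, hw⟩
  obtain rfl : l = 0 := hw.length_eq_zero hv
  obtain rfl : u = v := hw.1.symm.trans hw.2.1
  exact Nat.one_le_iff_ne_zero.1 hk (hcycle.length_eq_zero hv)

theorem OnCycle.mem_cycSucc (hu : OnCycle E u) : u ∈ CycSucc E :=
  ⟨u, hu, 0, _, isWalk_zero E u⟩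

theorem mem_cycSucc_of_edge (hu : u ∈ CycSucc E) (huv : (u, v) ∈ E) : v ∈ CycSucc E := by
  obtain ⟨c, hc, k, w, hw⟩ := hu
  exact ⟨c, hc, k + 1, _, hw.snoc huv⟩

theorem IsWalk.mem_cycSucc (hw : IsWalk E k w u v) (hu : u ∈ CycSucc E) : v ∈ CycSucc E := by
  obtain ⟨rfl, rfl, hedge⟩ := hw
  induction k with
  | zero => exact hu
  | succ k ih =>
    exact mem_cycSucc_of_edge (ih fun t ht => hedge t (ht.trans k.lt_succ_self))
      (hedge k k.lt_succ_self)

theorem IsWalk.mem_cycSucc_of_closed (hw : IsWalk E k w u u) (hk : 1 ≤ k) : u ∈ CycSucc E := by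
  induction k using Nat.strong_induction_on generalizing w u with
  | _ k ih =>
    by_cases hinj : ∀ s < k, ∀ t < k, w s = w t → s = t
    · exact OnCycle.mem_cycSucc ⟨k, w, hk, hw, hinj⟩
    · obtain ⟨s, t, hst, htk, hrepeat⟩ : ∃ s t, s < t ∧ t < k ∧ w s = w t := by
        push Not at hinj
        obtain ⟨s, hs, t, ht, heq, hne⟩ := hinj
        rcases hne.lt_or_gt with hlt | hgt
        · exact ⟨s, t, hlt, ht, heq⟩
        · exact ⟨t, s, hgt, hs, heq.symm⟩
      have hmem : w s ∈ CycSucc E :=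
        ih (t - s) (by lia) (hw.closed_segment hst.le htk.le hrepeat) (by lia)
      have htail := hw.segment (hst.trans htk).le le_rfl
      exact hw.2.1 ▸ htail.mem_cycSucc hmem

theorem IsWalk.notMem_cycSucc (hw : IsWalk E k w u v) (hv : v ∉ CycSucc E) {t : ℕ} (htk : t ≤ k) :
    w t ∉ CycSucc E :=
  fun ht => hv (hw.2.1 ▸ (hw.segment htk le_rfl).mem_cycSucc ht)

theorem IsWalk.isPath (hw : IsWalk E k w u v) (hv : v ∉ CycSucc E) : IsPath E k w u v := by
  have hne (s t : ℕ) (hst : s < t) (htk : t ≤ k) : w s ≠ w t := fun heq =>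
    hw.notMem_cycSucc hv (hst.le.trans htk)
      ((hw.closed_segment hst.le htk heq).mem_cycSucc_of_closed (Nat.sub_pos_of_lt hst))
  refine ⟨hw, fun s hs t ht heq => ?_⟩
  rcases lt_trichotomy s t with hlt | rfl | hgt
  · exact absurd heq (hne s t hlt ht)
  · rfl
  · exact absurd heq.symm (hne t s hgt hs)

theorem IsPath.ncard_image_Iic (hw : IsPath E k w u v) : (w '' Set.Iic k).ncard = k + 1 := by
  have hinj : Set.InjOn w (Set.Iic k) := fun s hs t ht => hw.2 s hs t ht
  rw [hinj.ncard_image, ← Finset.coe_Iic, Set.ncard_coe_finset, Nat.card_Iic]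

theorem IsWalk.add_one_lt_ncard_compl_cycSucc (hw : IsWalk E k w u v) (hv : v ∉ CycSucc E)
    (hfin : (CycSucc E)ᶜ.Finite) (hne : w '' Set.Iic k ≠ (CycSucc E)ᶜ) :
    k + 1 < (CycSucc E)ᶜ.ncard := by
  have hsub : w '' Set.Iic k ⊆ (CycSucc E)ᶜ := Set.image_subset_iff.2 fun t => hw.notMem_cycSucc hv
  rw [← (hw.isPath hv).ncard_image_Iic]
  exact Set.ncard_lt_ncard (hsub.ssubset_of_ne hne) hfin

end Walks

theorem ncard_preimage_some_add_one {α : Type*} {s : Set (Option α)} (hs : s.Finite)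
    (hnone : none ∈ s) : (some ⁻¹' s).ncard + 1 = s.ncard := by
  have hpreimage : some ⁻¹' s = some ⁻¹' (s \ {none}) := by ext; simp
  have hrange : s \ {none} ⊆ Set.range some := by
    rw [← compl_compl (Set.range some), Set.compl_range_some]
    exact Set.sdiff_subset_compl _ _
  rw [hpreimage, Set.ncard_preimage_of_injective_subset_range (Option.some_injective α) hrange,
    Set.ncard_sdiff_singleton_add_one hnone hs]

/-- The indices `i` for which the state node `α_i` belongs to the core. -/
def coreIndices {ι : Type*} (E : Set (Option ι × Option ι)) : Set ι := some ⁻¹' (CycSucc E)ᶜ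

theorem IsWalk.length_lt_ncard_coreIndices {n k : ℕ} {E : Set (Node n × Node n)} {w : ℕ → Node n}
    {u v : Node n} (hw : IsWalk E k w u v) (hv : v ∉ CycSucc E) (hβ : none ∉ CycSucc E)
    (hnospan : ¬ HasCoreSpanningPath n E) : k < (coreIndices E).ncard := by
  have hne : w '' Set.Iic k ≠ (CycSucc E)ᶜ := fun hspan =>
    hnospan ⟨k, w, u, v, hw.isPath hv, hspan.trans (Set.compl_eq_univ_sdiff _)⟩
  have hlt := hw.add_one_lt_ncard_compl_cycSucc hv (Set.toFinite _) hne
  rw [← ncard_preimage_some_add_one (Set.toFinite _) hβ] at hlt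
  exact Nat.lt_of_succ_lt_succ hlt

/-- The sparsity pattern that a digraph on the node `β = none` and the nodes `α_i = some i` imposes
on one matrix-vector pair: the pointwise form of the sparsity conditions in `Compliant`. -/
structure HasSparsityPattern {ι R : Type*} [Zero R] (E : Set (Option ι × Option ι))
    (M : Matrix ι ι R) (c : ι → R) : Prop where
  matrix_apply_eq_zero : ∀ i j, (some j, some i) ∉ E → M i j = 0
  vector_apply_eq_zero : ∀ i, (none, some i) ∉ E → c i = 0

theorem HasSparsityPattern.exists_isWalk {ι R : Type*} [Fintype ι] [DecidableEq ι] [Semiring R]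
    {E : Set (Option ι × Option ι)} {M : Matrix ι ι R} {c : ι → R} (h : HasSparsityPattern E M c)
    {k : ℕ} {i : ι} (hi : (M ^ k).mulVec c i ≠ 0) : ∃ w, IsWalk E (k + 1) w none (some i) := by
  induction k generalizing i with
  | zero =>
    have hedge : (none, some i) ∈ E := by
      by_contra hnot
      exact hi (by simpa using h.vector_apply_eq_zero i hnot)
    exact ⟨_, (isWalk_zero E none).snoc hedge⟩
  | succ k ih =>
    have hsum : ∑ j, M i j * (M ^ k).mulVec c j ≠ 0 := by
      rwa [pow_succ', ← Matrix.mulVec_mulVec] at hi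
    obtain ⟨j, -, hj⟩ := Finset.exists_ne_zero_of_sum_ne_zero hsum
    obtain ⟨w, hw⟩ := ih (right_ne_zero_of_mul hj)
    have hedge : (some j, some i) ∈ E := by
      by_contra hnot
      exact left_ne_zero_of_mul hj (h.matrix_apply_eq_zero i j hnot)
    exact ⟨_, hw.snoc hedge⟩

theorem HasSparsityPattern.pow_mulVec_apply_eq_zero {n : ℕ} {R : Type*} [Semiring R]
    {E : Set (Node n × Node n)} {M : Matrix (Fin n) (Fin n) R} {c : Fin n → R}
    (h : HasSparsityPattern E M c) (hβ : none ∉ CycSucc E) (hnospan : ¬ HasCoreSpanningPath n E)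
    {k : ℕ} (hk : (coreIndices E).ncard ≤ k + 1) {i : Fin n} (hi : i ∈ coreIndices E) :
    (M ^ k).mulVec c i = 0 := by
  by_contra hne
  obtain ⟨w, hw⟩ := h.exists_isWalk hne
  exact hk.not_gt (hw.length_lt_ncard_coreIndices hi hβ hnospan)

theorem Compliant.hasSparsityPattern {n : ℕ} {S : Type*} [TopologicalSpace S]
    {E : Set (Node n × Node n)} {A : S → Fin n → Fin n → ℝ} {b : S → Fin n → ℝ}
    (hAb : Compliant E A b) (σ : S) : HasSparsityPattern E (Matrix.of (A σ)) (b σ) :=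
  ⟨hAb.2.2.2.2.1 σ, hAb.2.2.2.2.2 σ⟩

theorem memLp_top_pow_mulVec_apply {S ι 𝕜 : Type*} [MeasurableSpace S] {μ : Measure S}
    [Fintype ι] [DecidableEq ι] [NormedRing 𝕜] {A : S → Matrix ι ι 𝕜} {b : S → ι → 𝕜}
    (hA : ∀ i j, MemLp (fun σ => A σ i j) ⊤ μ) (hb : ∀ i, MemLp (fun σ => b σ i) ⊤ μ)
    (k : ℕ) (i : ι) : MemLp (fun σ => (A σ ^ k).mulVec (b σ) i) ⊤ μ := by
  induction k generalizing i with
  | zero => simpa using hb i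
  | succ k ih =>
    have hsum : MemLp (fun σ => ∑ j, A σ i j * (A σ ^ k).mulVec (b σ) j) ⊤ μ :=
      memLp_finsetSum _ fun j _ => (ih j).mul' (hA i j)
    simp only [pow_succ', ← Matrix.mulVec_mulVec]
    exact hsum

theorem Compliant.integrable_pow_mulVec {n : ℕ} {S : Type*} [TopologicalSpace S]
    [MeasurableSpace S] [OpensMeasurableSpace S] {μ : Measure S} [IsFiniteMeasure μ]
    {E : Set (Node n × Node n)} {A : S → Fin n → Fin n → ℝ} {b : S → Fin n → ℝ}
    (hAb : Compliant E A b) (k : ℕ) :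
    Integrable (fun σ => (Matrix.of (A σ) ^ k).mulVec (b σ)) μ := by
  obtain ⟨hA, hb, ⟨CA, hCA⟩, ⟨Cb, hCb⟩, -, -⟩ := hAb
  have hA_memLp (i j : Fin n) : MemLp (fun σ => A σ i j) ⊤ μ :=
    memLp_top_of_bound (by fun_prop) CA (.of_forall fun σ => hCA σ i j)
  have hb_memLp (i : Fin n) : MemLp (fun σ => b σ i) ⊤ μ :=
    memLp_top_of_bound (by fun_prop) Cb (.of_forall fun σ => hCb σ i)
  exact Integrable.of_eval fun i =>
    (memLp_top_pow_mulVec_apply (A := fun σ => Matrix.of (A σ)) hA_memLp hb_memLp k i).integrable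
      le_top

theorem span_range_ne_top_of_lt_finrank {R M N : Type*} [Ring R] [StrongRankCondition R]
    [AddCommGroup M] [Module R M] [AddCommGroup N] [Module R N] {f : M →ₗ[R] N}
    (hf : Function.Surjective f) {v : ℕ → M} {m : ℕ} (hv : ∀ k, m ≤ k → f (v k) = 0)
    (hm : m < Module.finrank R N) : Submodule.span R (Set.range v) ≠ ⊤ := by
  intro htop
  have hspan : Submodule.span R (Set.range fun k : Fin m => f (v k)) = ⊤ := by
    rw [eq_top_iff, ← LinearMap.range_eq_top.2 hf, LinearMap.range_eq_map, ← htop,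
      Submodule.map_span, Submodule.span_le]
    rintro _ ⟨_, ⟨k, rfl⟩, rfl⟩
    by_cases hk : k < m
    · exact Submodule.subset_span ⟨⟨k, hk⟩, rfl⟩
    · simp [hv k (not_lt.1 hk)]
  have hle : Module.finrank R N ≤ m := by
    rw [← finrank_top R N, ← hspan]
    simpa only [Set.finrank, Fintype.card_fin] using
      finrank_range_le_card (R := R) fun k : Fin m => f (v k)
  exact hle.not_gt hm

theorem span_range_ne_top_of_lt_ncard {R ι : Type*} [Ring R] [StrongRankCondition R]
    {v : ℕ → ι → R} {T : Set ι} {m : ℕ} (hv : ∀ k, m ≤ k → ∀ i ∈ T, v k i = 0)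
    (hm : m < T.ncard) : Submodule.span R (Set.range v) ≠ ⊤ := by
  have : Fintype T := (Set.finite_of_ncard_pos (m.zero_le.trans_lt hm)).fintype
  refine span_range_ne_top_of_lt_finrank
    (LinearMap.funLeft_surjective_of_injective R R _ (Subtype.val_injective (p := (· ∈ T))))
    (fun k hk => funext fun i => hv k hk i i.2) ?_
  rwa [Module.finrank_fintype_fun_eq_card, ← Nat.card_eq_fintype_card]

theorem stmt5_general {n : ℕ} (E : Set (Node n × Node n)) (hβ : ∀ e ∈ E, e.2 ≠ none)
    (hnospan : ¬ HasCoreSpanningPath n E) {S : Type*} [MeasurableSpace S] (μ : Measure S)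
    (A : S → Fin n → Fin n → ℝ) (b : S → Fin n → ℝ)
    (hpattern : ∀ᵐ σ ∂μ, HasSparsityPattern E (Matrix.of (A σ)) (b σ))
    (hint : ∀ k : ℕ, Integrable (fun σ => (Matrix.of (A σ) ^ k).mulVec (b σ)) μ) :
    Submodule.span ℝ {x : Fin n → ℝ |
        ∃ k : ℕ, x = ∫ σ, (Matrix.of (A σ) ^ k).mulVec (b σ) ∂μ} ≠ ⊤ := by
  have hβ_core : none ∉ CycSucc E := notMem_cycSucc_of_forall_snd_ne hβ
  have hpos : 0 < (coreIndices E).ncard :=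
    (isWalk_zero E none).length_lt_ncard_coreIndices hβ_core hβ_core hnospan
  have hmoment (k : ℕ) (hk : (coreIndices E).ncard - 1 ≤ k) (i : Fin n) (hi : i ∈ coreIndices E) :
      (∫ σ, (Matrix.of (A σ) ^ k).mulVec (b σ) ∂μ) i = 0 := by
    rw [eval_integral (hint k).eval]
    refine integral_eq_zero_of_ae ?_
    filter_upwards [hpattern] with σ hσ
    exact hσ.pow_mulVec_apply_eq_zero hβ_core hnospan (by lia) hi
  simpa only [Set.range, eq_comm] using
    span_range_ne_top_of_lt_ncard hmoment (Nat.sub_one_lt_of_lt hpos)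

/-- necessity: if the core of `G` has no directed spanning path, then
no compliant pair satisfies the averaged-controllability rank criterion — the span of
the moments is a proper subspace of `ℝⁿ`. -/
theorem stmt5 {n : ℕ} (hn : 1 ≤ n) (E : Set (Node n × Node n)) (hG : MemG n E)
    (hnospan : ¬ HasCoreSpanningPath n E)
    (S : Type*) [TopologicalSpace S] [MeasurableSpace S] [BorelSpace S]
    (μ : Measure S) [IsProbabilityMeasure μ]
    (A : S → Fin n → Fin n → ℝ) (b : S → Fin n → ℝ) (hAb : Compliant E A b) :
    Submodule.span ℝ {x : Fin n → ℝ |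
        ∃ k : ℕ, x = ∫ σ, (Matrix.of (A σ) ^ k).mulVec (b σ) ∂μ} ≠ ⊤ := by
  exact stmt5_general E hG.1 hnospan μ A b (.of_forall hAb.hasSparsityPattern)
    hAb.integrable_pow_mulVec
end

section
/- Let n ≥ 1, let G ∈ 𝒢_{n,1} be reduced, and let G_p be one of its nontrivial strong components (a directed cycle of length ℓ_p) with distinguished node α_{p₀}. Then for every node α_i ∈ V_p⁺ there is a unique path τ_{α_{p₀}α_i} in G from α_{p₀} to α_i, and every walk τ from β to α_i is the concatenation τ_{βα_{p₀}} · G_p^m · τ_{α_{p₀}α_i} for some m ∈ ℕ, where τ_{βα_{p₀}} is the unique path from β to α_{p₀} and G_p^m denotes the closed walk traversing the cycle G_p exactly m times starting and ending at α_{p₀} (in particular, the length of τ equals dep(α_i) + m·ℓ_p). -/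
open MeasureTheory

/-- There is exactly one path from `u` to `v`. -/
def UniquePathFrom {V : Type*} (E : Set (V × V)) (u v : V) : Prop :=
  (∃ k w, IsPath E k w u v) ∧
  ∀ (k : ℕ) (w : ℕ → V) (k' : ℕ) (w' : ℕ → V),
    IsPath E k w u v → IsPath E k' w' u v → k = k' ∧ ∀ t ≤ k, w t = w' t

/-- A directed tree on the node set `N`: there is a unique root, from which every node
is reachable by a unique path. -/
def IsDirectedTree {W : Type*} (N : Set W) (F : Set (W × W)) : Prop :=
  ∃ r ∈ N, (∀ v ∈ N, UniquePathFrom F r v) ∧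
    (∀ r' ∈ N, (∀ v ∈ N, Reachable F r' v) → r' = r)

/-- The strong component of `u`: nodes mutually reachable with `u`. -/
def StrongComp {V : Type*} (E : Set (V × V)) (u : V) : Set V :=
  {v | Reachable E u v ∧ Reachable E v u}

/-- The nodes of the skeleton graph (condensation): the strong components. -/
def SkelNodes {V : Type*} (E : Set (V × V)) : Set (Set V) :=
  {C | ∃ u, C = StrongComp E u}

/-- The edges of the skeleton graph: `(C, C')` is an edge whenever some edge of `E`
goes from a node of `C` to a node of `C'`. -/
def SkelEdges {V : Type*} (E : Set (V × V)) : Set (Set V × Set V) :=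
  {p | p.1 ∈ SkelNodes E ∧ p.2 ∈ SkelNodes E ∧ ∃ u ∈ p.1, ∃ v ∈ p.2, (u, v) ∈ E}

/-- The induced subgraph on `N` (w.r.t. the ambient edge set `F`) is a directed path:
its nodes can be ordered `w 0, …, w r` so that its edges are exactly the consecutive
pairs. -/
def IsPathGraphOn {W : Type*} (N : Set W) (F : Set (W × W)) : Prop :=
  ∃ (r : ℕ) (w : ℕ → W), (∀ s ≤ r, ∀ t ≤ r, w s = w t → s = t) ∧
    {x | ∃ t ≤ r, w t = x} = N ∧
    (∀ p : W × W, (p ∈ F ∧ p.1 ∈ N ∧ p.2 ∈ N) ↔ ∃ t < r, p = (w t, w (t + 1)))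

/-- The induced subgraph on `C` is a single directed cycle: its nodes can be cyclically
ordered so that its edges are exactly the consecutive pairs. -/
def IsSingleCycleOn {V : Type*} (C : Set V) (E : Set (V × V)) : Prop :=
  ∃ (l : ℕ) (w : ℕ → V), 1 ≤ l ∧ (∀ s < l, ∀ t < l, w s = w t → s = t) ∧
    {x | ∃ t < l, w t = x} = C ∧
    (∀ p : V × V, (p ∈ E ∧ p.1 ∈ C ∧ p.2 ∈ C) ↔ ∃ t < l, p = (w t, w ((t + 1) % l)))

/-- `G ∈ 𝒢_{n,1}` is reduced (Definition 5 of the paper): (1) the skeleton graph `S`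
with self-loops removed is a directed tree and the core `S*` of `S` is a directed path;
(2) every edge of `S` between distinct components comes from a unique edge of `G`;
(3) every node of `S` with a self-loop is an out-neighbor of `S*`, and every nontrivial
strong component of `G` is a single directed cycle. -/
def ReducedGraph (n : ℕ) (E : Set (Node n × Node n)) : Prop :=
  MemG n E ∧
  IsDirectedTree (SkelNodes E) {p ∈ SkelEdges E | p.1 ≠ p.2} ∧
  IsPathGraphOn (CoreOn (SkelNodes E) (SkelEdges E)) (SkelEdges E) ∧
  (∀ p ∈ SkelEdges E, p.1 ≠ p.2 →
    ∃! e : Node n × Node n, e ∈ E ∧ e.1 ∈ p.1 ∧ e.2 ∈ p.2) ∧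
  (∀ C : Set (Node n), (C, C) ∈ SkelEdges E →
    (∃ C' ∈ CoreOn (SkelNodes E) (SkelEdges E), (C', C) ∈ SkelEdges E) ∧
    IsSingleCycleOn C E)

/-!
Walks are traced backwards from their end. The skeleton tree and the uniqueness of edges between
components leave only one edge entering each component from outside, and a component reachable from
the cycle `C` but different from it is trivial, since its entering edge would otherwise start in the
core, which no cycle reaches. So `p0` is the only node reachable from `p0` that may have two
in-neighbors: its predecessor on the cycle and the core node through which `C` is entered. Backwards
from `v` a walk must therefore follow the path from `p0` to `v`; each time it stands at `p0` it
either makes one more full turn or leaves for good along the path from the source.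
-/

section Walks

variable {V : Type*} {E : Set (V × V)} {a b v : V} {j k : ℕ} {w p : ℕ → V}

/-- The in-neighbors of a node `v`: the sources of the edges ending at `v`. -/
def inNeighbors (E : Set (V × V)) (v : V) : Set V := {u | (u, v) ∈ E}

namespace IsWalk

theorem take (hw : IsWalk E k w a b) (hj : j ≤ k) : IsWalk E j w a (w j) :=
  ⟨hw.1, rfl, fun t ht => hw.2.2 t (by omega)⟩

theorem drop (hw : IsWalk E k w a b) (hj : j ≤ k) :
    IsWalk E (k - j) (fun t => w (j + t)) (w j) b :=
  ⟨rfl, by simp only [Nat.add_sub_cancel' hj, hw.2.1], fun t ht => hw.2.2 (j + t) (by omega)⟩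

theorem last_edge (hw : IsWalk E (k + 1) w a b) : (w k, b) ∈ E :=
  hw.2.1 ▸ hw.2.2 k k.lt_succ_self

theorem snoc_s9 (hw : IsWalk E k w a b) (h : (b, v) ∈ E) :
    IsWalk E (k + 1) (Function.update w (k + 1) v) a v := by
  refine ⟨by simpa using hw.1, by simp, fun t ht => ?_⟩
  rw [Function.update_of_ne ht.ne]
  rcases Nat.lt_succ_iff_lt_or_eq.mp ht with ht | rfl
  · rw [Function.update_of_ne (by omega)]
    exact hw.2.2 t ht
  · rwa [Function.update_self, hw.2.1]

theorem reachable_apply (hw : IsWalk E k w a b) (hj : j ≤ k) : Reachable E a (w j) :=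
  ⟨j, w, hw.take hj⟩

theorem apply_reachable (hw : IsWalk E k w a b) (hj : j ≤ k) : Reachable E (w j) b :=
  ⟨_, _, hw.drop hj⟩

theorem exists_step_into {D : Set V} (hw : IsWalk E k w a b) (ha : a ∉ D) (hb : b ∈ D) :
    ∃ i < k, w i ∉ D ∧ w (i + 1) ∈ D := by
  by_contra! hstay
  have houtside : ∀ i ≤ k, w i ∉ D := by
    intro i
    induction i with
    | zero => exact fun _ => hw.1 ▸ ha
    | succ i ih => exact fun hi => hstay i hi (ih (by omega))
  exact houtside k le_rfl (hw.2.1 ▸ hb)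

theorem eq_suffix (hw : IsWalk E k w a v) (hp : IsWalk E j p b v)
    (ha : ∀ t, 0 < t → t ≤ j → p t ≠ a)
    (hin : ∀ t, 0 < t → t ≤ j → (inNeighbors E (p t)).Subsingleton) :
    ∃ i, k = i + j ∧ ∀ t ≤ j, w (i + t) = p t := by
  induction j generalizing k v with
  | zero =>
    refine ⟨k, rfl, fun t ht => ?_⟩
    obtain rfl : t = 0 := by omega
    exact hw.2.1.trans hp.2.1.symm
  | succ j ih =>
    obtain rfl | ⟨k, rfl⟩ : k = 0 ∨ ∃ k', k = k' + 1 := by cases k <;> simp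
    · exact absurd (hp.2.1.trans (hw.2.1.symm.trans hw.1)) (ha (j + 1) j.succ_pos le_rfl)
    have hinv : (inNeighbors E v).Subsingleton := hp.2.1 ▸ hin (j + 1) j.succ_pos le_rfl
    have hprev : w k = p j := hinv hw.last_edge hp.last_edge
    obtain ⟨i, rfl, hi⟩ := ih (hprev ▸ hw.take k.le_succ) (hp.take j.le_succ)
      (fun t h0 ht => ha t h0 (by omega)) (fun t h0 ht => hin t h0 (by omega))
    refine ⟨i, rfl, fun t ht => ?_⟩
    rcases Nat.le_succ_iff.mp ht with ht | rfl
    · exact hi t ht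
    · exact hw.2.1.trans hp.2.1.symm

end IsWalk

theorem reachable_iff_reflTransGen :
    Reachable E a b ↔ Relation.ReflTransGen (fun x y => (x, y) ∈ E) a b := by
  constructor
  · rintro ⟨k, w, hw⟩
    induction k generalizing b with
    | zero => rw [← hw.1, hw.2.1]
    | succ k ih => exact (ih (hw.take k.le_succ)).tail hw.last_edge
  · intro h
    induction h with
    | refl => exact ⟨0, fun _ => a, rfl, rfl, by simp⟩
    | tail _ hbc ih =>
      obtain ⟨k, w, hw⟩ := ih
      exact ⟨_, _, hw.snoc_s9 hbc⟩

namespace Reachable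

theorem refl (E : Set (V × V)) (a : V) : Reachable E a a :=
  reachable_iff_reflTransGen.mpr .refl

theorem trans (hab : Reachable E a b) (hbv : Reachable E b v) : Reachable E a v :=
  reachable_iff_reflTransGen.mpr
    ((reachable_iff_reflTransGen.mp hab).trans (reachable_iff_reflTransGen.mp hbv))

theorem tail (hab : Reachable E a b) (hbv : (b, v) ∈ E) : Reachable E a v :=
  reachable_iff_reflTransGen.mpr ((reachable_iff_reflTransGen.mp hab).tail hbv)

theorem mono {F : Set (V × V)} (hEF : E ⊆ F) (hab : Reachable E a b) : Reachable F a b := by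
  obtain ⟨k, w, h0, hk, hstep⟩ := hab
  exact ⟨k, w, h0, hk, fun t ht => hEF (hstep t ht)⟩

end Reachable

namespace IsPath

theorem snoc_s9 (hp : IsPath E k p a b) (h : (b, v) ∈ E) (hv : ∀ t ≤ k, p t ≠ v) :
    IsPath E (k + 1) (Function.update p (k + 1) v) a v := by
  refine ⟨hp.1.snoc_s9 h, fun s hs t ht => ?_⟩
  rcases Nat.le_succ_iff.mp hs with hs | rfl <;> rcases Nat.le_succ_iff.mp ht with ht | rfl
  · rw [Function.update_of_ne (by omega), Function.update_of_ne (by omega)]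
    exact hp.2 s hs t ht
  · rw [Function.update_of_ne (by omega), Function.update_self]
    exact fun he => absurd he (hv s hs)
  · rw [Function.update_self, Function.update_of_ne (by omega)]
    exact fun he => absurd he.symm (hv t ht)
  · exact fun _ => rfl

theorem apply_ne_start (hp : IsPath E k p a b) {t : ℕ} (h0 : 0 < t) (ht : t ≤ k) : p t ≠ a :=
  fun he => h0.ne' (hp.2 t ht 0 k.zero_le (he.trans hp.1.1.symm))

end IsPath

theorem Reachable.exists_isPath (h : Reachable E a b) : ∃ k p, IsPath E k p a b := by
  induction reachable_iff_reflTransGen.mp h with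
  | refl => exact ⟨0, fun _ => a, ⟨rfl, rfl, by simp⟩, by omega⟩
  | @tail b v hab hbv ih =>
    obtain ⟨k, p, hp⟩ := ih (reachable_iff_reflTransGen.mpr hab)
    by_cases hv : ∃ t ≤ k, p t = v
    · obtain ⟨t, ht, rfl⟩ := hv
      exact ⟨t, p, hp.1.take ht, fun s hs s' hs' => hp.2 s (by omega) s' (by omega)⟩
    · push Not at hv
      exact ⟨_, _, hp.snoc_s9 hbv hv⟩

theorem onCycle_of_edge (hab : (a, b) ∈ E) (hba : Reachable E b a) : OnCycle E b := by
  obtain ⟨k, p, hp⟩ := hba.exists_isPath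
  refine ⟨k + 1, _, k.succ_pos, hp.1.snoc_s9 hab, fun s hs t ht => ?_⟩
  rw [Function.update_of_ne hs.ne, Function.update_of_ne ht.ne]
  exact hp.2 s (by omega) t (by omega)

theorem uniquePathFrom_of_subsingleton_inNeighbors
    (hin : ∀ x, Reachable E a x → x ≠ a → (inNeighbors E x).Subsingleton)
    (hav : Reachable E a v) : UniquePathFrom E a v := by
  refine ⟨hav.exists_isPath, fun k w k' w' hw hw' => ?_⟩
  obtain ⟨i, rfl, hi⟩ := hw.1.eq_suffix hw'.1 (fun t => hw'.apply_ne_start)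
    (fun t h0 ht => hin _ (hw'.1.reachable_apply ht) (hw'.apply_ne_start h0 ht))
  obtain rfl : i = 0 :=
    hw.2 i (by omega) 0 (by omega) ((hi 0 (by omega)).trans (hw'.1.1.trans hw.1.1.symm))
  exact ⟨by omega, fun t ht => by simpa using hi t (by omega)⟩

end Walks

section CycleWithEntry

variable {V : Type*} {E : Set (V × V)} {β a v : V} {k l kb k1 : ℕ} {w c pb p1 : ℕ → V}

theorem Reachable.eq_of_inNeighbors_eq_empty (hβ : inNeighbors E β = ∅) (h : Reachable E a β) :
    a = β := by
  rcases (reachable_iff_reflTransGen.mp h).cases_tail with he | ⟨y, -, hy⟩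
  · exact he.symm
  · exact (hβ.subset hy).elim

theorem IsWalk.apply_ne_of_inNeighbors_eq_empty (hβ : inNeighbors E β = ∅)
    (hw : IsWalk E k w a v) {t : ℕ} (h0 : 0 < t) (ht : t ≤ k) : w t ≠ β := by
  obtain ⟨s, rfl⟩ := Nat.exists_eq_add_of_le' h0
  rintro rfl
  exact hβ.subset (hw.2.2 s ht)

theorem IsCycle.apply_mod (hc : IsCycle E l c a) {t : ℕ} (ht : t ≤ l) : c (t % l) = c t := by
  rcases ht.lt_or_eq with ht | rfl
  · rw [Nat.mod_eq_of_lt ht]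
  · rw [Nat.mod_self, hc.2.1.1, hc.2.1.2.1]

theorem IsWalk.eq_or_exists_last_turn (hw : IsWalk E k w β a) (hβ : inNeighbors E β = ∅)
    (hc : IsCycle E l c a) (hpb : IsWalk E kb pb β a)
    (hina : ∀ y ∈ inNeighbors E a, y = c (l - 1) ∨ y = pb (kb - 1))
    (hinc : ∀ t, 0 < t → t < l → (inNeighbors E (c t)).Subsingleton)
    (hinpb : ∀ t, 0 < t → t < kb → (inNeighbors E (pb t)).Subsingleton) :
    (k = kb ∧ ∀ t ≤ k, w t = pb t) ∨
      ∃ i, k = i + l ∧ IsWalk E i w β a ∧ ∀ t ≤ l, w (i + t) = c t := by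
  obtain ⟨l, rfl⟩ := Nat.exists_eq_add_of_le' hc.1
  have hβa : β ≠ a := by
    rintro rfl
    exact hβ.subset hc.2.1.last_edge
  obtain ⟨kb, rfl⟩ :=
    Nat.exists_eq_succ_of_ne_zero (n := kb) (by rintro rfl; exact hβa (hpb.1.symm.trans hpb.2.1))
  obtain ⟨k, rfl⟩ :=
    Nat.exists_eq_succ_of_ne_zero (n := k) (by rintro rfl; exact hβa (hw.1.symm.trans hw.2.1))
  have hw' := hw.take k.le_succ
  rcases hina _ hw.last_edge with hturn | hexit
  · have hc' := hc.2.1.take l.le_succ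
    obtain ⟨i, rfl, hi⟩ := eq_suffix (hturn ▸ hw') hc'
      (fun t => hc'.apply_ne_of_inNeighbors_eq_empty hβ) (fun t h0 ht => hinc t h0 (by omega))
    refine .inr ⟨i, rfl, ((hi 0 l.zero_le).trans hc.2.1.1) ▸ hw.take (by omega), fun t ht => ?_⟩
    rcases Nat.le_succ_iff.mp ht with ht | rfl
    · exact hi t ht
    · exact hw.2.1.trans hc.2.1.2.1.symm
  · have hpb' := hpb.take kb.le_succ
    obtain ⟨i, rfl, hi⟩ := eq_suffix (hexit ▸ hw') hpb'
      (fun t => hpb'.apply_ne_of_inNeighbors_eq_empty hβ) (fun t h0 ht => hinpb t h0 (by omega))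
    obtain rfl : i = 0 := by
      by_contra hi0
      exact hw.apply_ne_of_inNeighbors_eq_empty hβ (Nat.pos_of_ne_zero hi0) (by omega)
        ((hi 0 kb.zero_le).trans hpb.1)
    refine .inl ⟨by omega, fun t ht => ?_⟩
    rcases Nat.le_succ_iff.mp ht with ht | rfl
    · simpa using hi t (by omega)
    · rw [hw.2.1, zero_add, hpb.2.1]

theorem IsWalk.exists_eq_append_cycle_pow (hw : IsWalk E k w β a) (hβ : inNeighbors E β = ∅)
    (hc : IsCycle E l c a) (hpb : IsWalk E kb pb β a)
    (hina : ∀ y ∈ inNeighbors E a, y = c (l - 1) ∨ y = pb (kb - 1))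
    (hinc : ∀ t, 0 < t → t < l → (inNeighbors E (c t)).Subsingleton)
    (hinpb : ∀ t, 0 < t → t < kb → (inNeighbors E (pb t)).Subsingleton) :
    ∃ m, k = kb + m * l ∧ ∀ t ≤ k, w t = if t ≤ kb then pb t else c ((t - kb) % l) := by
  induction k using Nat.strong_induction_on with
  | _ k ih =>
  rcases hw.eq_or_exists_last_turn hβ hc hpb hina hinc hinpb with
    ⟨rfl, hpath⟩ | ⟨i, rfl, hwi, hturn⟩
  · exact ⟨0, by simp, fun t ht => by rw [if_pos ht, hpath t ht]⟩
  · obtain ⟨m, rfl, hm⟩ := ih i (by have := hc.1; omega) hwi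
    refine ⟨m + 1, by ring, fun t ht => ?_⟩
    rcases Nat.lt_or_ge (kb + m * l) t with hlt | hle
    · obtain ⟨s, rfl⟩ := Nat.exists_eq_add_of_le hlt.le
      have hs : s ≤ l := by omega
      have hoffset : kb + m * l + s - kb = s + m * l := by omega
      rw [if_neg (by omega), hoffset, Nat.add_mul_mod_self_right, hc.apply_mod hs, hturn s hs]
    · exact hm t hle

theorem IsWalk.exists_eq_append_cycle_pow_append (hw : IsWalk E k w β v)
    (hβ : inNeighbors E β = ∅) (hc : IsCycle E l c a) (hpb : IsWalk E kb pb β a)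
    (hina : ∀ y ∈ inNeighbors E a, y = c (l - 1) ∨ y = pb (kb - 1))
    (hinpb : ∀ t, 0 < t → t < kb → (inNeighbors E (pb t)).Subsingleton)
    (hin : ∀ x, Reachable E a x → x ≠ a → (inNeighbors E x).Subsingleton)
    (hp1 : IsPath E k1 p1 a v) :
    ∃ m, k = kb + m * l + k1 ∧ ∀ t ≤ k, w t =
      if t ≤ kb then pb t
      else if t ≤ kb + m * l then c ((t - kb) % l)
      else p1 (t - (kb + m * l)) := by
  have hinc : ∀ t, 0 < t → t < l → (inNeighbors E (c t)).Subsingleton := fun t h0 ht =>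
    hin _ (hc.2.1.reachable_apply ht.le) fun he =>
      h0.ne' (hc.2.2 t ht 0 (by omega) (he.trans hc.2.1.1.symm))
  obtain ⟨i, rfl, hi⟩ := hw.eq_suffix hp1.1
    (fun t => hp1.1.apply_ne_of_inNeighbors_eq_empty hβ)
    (fun t h0 ht => hin _ (hp1.1.reachable_apply ht) (hp1.apply_ne_start h0 ht))
  have hwi : IsWalk E i w β a := ((hi 0 k1.zero_le).trans hp1.1.1) ▸ hw.take (by omega)
  obtain ⟨m, rfl, hm⟩ := hwi.exists_eq_append_cycle_pow hβ hc hpb hina hinc hinpb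
  refine ⟨m, rfl, fun t ht => ?_⟩
  rcases Nat.lt_or_ge (kb + m * l) t with hlt | hle
  · rw [if_neg (by omega), if_neg (by omega), ← hi _ (by omega), Nat.add_sub_cancel' hlt.le]
  · rw [hm t hle, if_pos hle]

end CycleWithEntry

section Skeleton

variable {V : Type*} {E : Set (V × V)} {C D : Set V} {a b u v x y : V}

theorem mem_strongComp_self (E : Set (V × V)) (u : V) : u ∈ StrongComp E u :=
  ⟨.refl E u, .refl E u⟩

theorem reachable_of_mem_skelNodes (hC : C ∈ SkelNodes E) (ha : a ∈ C) (hb : b ∈ C) :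
    Reachable E a b := by
  obtain ⟨u, rfl⟩ := hC
  exact ha.2.trans hb.1

theorem eq_strongComp_of_mem (hC : C ∈ SkelNodes E) (ha : a ∈ C) : C = StrongComp E a := by
  obtain ⟨u, rfl⟩ := hC
  ext x
  exact ⟨fun hx => ⟨ha.2.trans hx.1, hx.2.trans ha.1⟩,
    fun hx => ⟨ha.1.trans hx.1, hx.2.trans ha.2⟩⟩

theorem strongComp_edge (h : (u, v) ∈ E) : (StrongComp E u, StrongComp E v) ∈ SkelEdges E :=
  ⟨⟨u, rfl⟩, ⟨v, rfl⟩, u, mem_strongComp_self E u, v, mem_strongComp_self E v, h⟩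

theorem Reachable.strongComp (h : Reachable E u v) :
    Reachable (SkelEdges E) (StrongComp E u) (StrongComp E v) :=
  reachable_iff_reflTransGen.mpr <|
    (reachable_iff_reflTransGen.mp h).lift (StrongComp E) fun _ _ => strongComp_edge

theorem reachable_of_reachable_skelEdges (hC : C ∈ SkelNodes E)
    (h : Reachable (SkelEdges E) C D) (ha : a ∈ C) (hb : b ∈ D) : Reachable E a b := by
  induction reachable_iff_reflTransGen.mp h generalizing b with
  | refl => exact reachable_of_mem_skelNodes hC ha hb
  | tail hCA hAD ih =>
    obtain ⟨-, hD, x, hx, y, hy, hxy⟩ := hAD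
    exact ((ih (reachable_iff_reflTransGen.mpr hCA) hx).tail hxy).trans
      (reachable_of_mem_skelNodes hD hy hb)

theorem mem_cycSucc_of_skelLoop (hC : (C, C) ∈ SkelEdges E) (hx : x ∈ C) : x ∈ CycSucc E := by
  obtain ⟨hC, -, u, hu, v, hv, huv⟩ := hC
  exact ⟨v, onCycle_of_edge huv (reachable_of_mem_skelNodes hC hv hu),
    reachable_of_mem_skelNodes hC hv hx⟩

theorem Reachable.notMem_cycSucc (h : Reachable E x y) (hy : y ∉ CycSucc E) : x ∉ CycSucc E :=
  fun ⟨u, hu, hux⟩ => hy ⟨u, hu, hux.trans h⟩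

theorem notMem_strongComp_of_notMem_cycSucc (ha : OnCycle E a) (hu : u ∉ CycSucc E) :
    u ∉ StrongComp E a :=
  fun h => hu ⟨a, ha, h.1⟩

theorem OnCycle.skelLoop (h : OnCycle E u) : (StrongComp E u, StrongComp E u) ∈ SkelEdges E := by
  obtain ⟨k, c, hk, hc, -⟩ := h
  obtain ⟨k, rfl⟩ := Nat.exists_eq_add_of_le' hk
  exact ⟨⟨u, rfl⟩, ⟨u, rfl⟩, c k, ⟨hc.reachable_apply k.le_succ, hc.apply_reachable k.le_succ⟩,
    u, mem_strongComp_self E u, hc.last_edge⟩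

theorem strongComp_mem_cycSucc (h : x ∈ CycSucc E) : StrongComp E x ∈ CycSucc (SkelEdges E) := by
  obtain ⟨u, hu, hux⟩ := h
  exact ⟨StrongComp E u, onCycle_of_edge hu.skelLoop (.refl _ _), hux.strongComp⟩

theorem subsingleton_inNeighbors_inter_of_isSingleCycleOn (hC : IsSingleCycleOn C E) (hx : x ∈ C) :
    (inNeighbors E x ∩ C).Subsingleton := by
  obtain ⟨l, w, -, hinj, -, hedge⟩ := hC
  rintro y ⟨hyx, hy⟩ y' ⟨hyx', hy'⟩
  obtain ⟨s, hs, hs'⟩ := (hedge (y, x)).mp ⟨hyx, hy, hx⟩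
  obtain ⟨t, ht, ht'⟩ := (hedge (y', x)).mp ⟨hyx', hy', hx⟩
  obtain ⟨rfl, hxs⟩ := Prod.mk.inj hs'
  obtain ⟨rfl, hxt⟩ := Prod.mk.inj ht'
  have hl : 0 < l := by omega
  have hmod : s + 1 ≡ t + 1 [MOD l] :=
    hinj _ (Nat.mod_lt _ hl) _ (Nat.mod_lt _ hl) (hxs.symm.trans hxt)
  rw [(Nat.ModEq.add_right_cancel' 1 hmod).eq_of_lt_of_lt hs ht]

-- Unique paths from the root do not exclude edges from a node back to one of its ancestors.
theorem IsDirectedTree.eq_of_edge {N : Set V} (hN : IsDirectedTree N E) (ha : a ∈ N) (hb : b ∈ N)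
    (hv : v ∈ N) (hav : (a, v) ∈ E) (hbv : (b, v) ∈ E) (hva : ¬ Reachable E v a)
    (hvb : ¬ Reachable E v b) : a = b := by
  obtain ⟨r, -, hpath, -⟩ := hN
  have hextend : ∀ y ∈ N, (y, v) ∈ E → ¬ Reachable E v y →
      ∃ k p, IsPath E (k + 1) p r v ∧ p k = y := by
    intro y hy hyv hvy
    obtain ⟨⟨k, p, hp⟩, -⟩ := hpath y hy
    refine ⟨k, _, hp.snoc_s9 hyv ?_, ?_⟩
    · rintro t ht rfl
      exact hvy (hp.1.apply_reachable ht)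
    · rw [Function.update_of_ne (by omega), hp.1.2.1]
  obtain ⟨k, p, hp, rfl⟩ := hextend a ha hav hva
  obtain ⟨k', p', hp', rfl⟩ := hextend b hb hbv hvb
  obtain ⟨hk, hpp'⟩ := (hpath v hv).2 _ _ _ _ hp hp'
  obtain rfl : k = k' := by omega
  exact hpp' k k.le_succ

end Skeleton

/-- A tree of cycles: the conditions of a reduced graph on the skeleton tree, on the edges between
components and on the nontrivial components, for a digraph on an arbitrary node type. -/
structure IsTreeOfCycles {V : Type*} (E : Set (V × V)) : Prop where
  isDirectedTree : IsDirectedTree (SkelNodes E) {p ∈ SkelEdges E | p.1 ≠ p.2}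
  existsUnique_edge : ∀ p ∈ SkelEdges E, p.1 ≠ p.2 → ∃! e : V × V, e ∈ E ∧ e.1 ∈ p.1 ∧ e.2 ∈ p.2
  exists_core_skelEdge : ∀ C, (C, C) ∈ SkelEdges E →
    ∃ C' ∈ CoreOn (SkelNodes E) (SkelEdges E), (C', C) ∈ SkelEdges E
  isSingleCycleOn : ∀ C, (C, C) ∈ SkelEdges E → IsSingleCycleOn C E

theorem ReducedGraph.isTreeOfCycles {n : ℕ} {E : Set (Node n × Node n)} (h : ReducedGraph n E) :
    IsTreeOfCycles E where
  isDirectedTree := h.2.1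
  existsUnique_edge := h.2.2.2.1
  exists_core_skelEdge C hC := (h.2.2.2.2 C hC).1
  isSingleCycleOn C hC := (h.2.2.2.2 C hC).2

namespace IsTreeOfCycles

variable {V : Type*} {E : Set (V × V)} {D : Set V} {u x x' y y' a : V}

theorem entering_edge_unique (hE : IsTreeOfCycles E) (hD : D ∈ SkelNodes E)
    (hyx : (y, x) ∈ E) (hyx' : (y', x') ∈ E) (hx : x ∈ D) (hx' : x' ∈ D) (hy : y ∉ D)
    (hy' : y' ∉ D) : (y, x) = (y', x') := by
  have hskel : ∀ {y x}, (y, x) ∈ E → x ∈ D → y ∉ D →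
      (StrongComp E y, D) ∈ {p ∈ SkelEdges E | p.1 ≠ p.2} := by
    intro y x hyx hx hy
    exact ⟨eq_strongComp_of_mem hD hx ▸ strongComp_edge hyx,
      fun he : StrongComp E y = D => hy (he ▸ mem_strongComp_self E y)⟩
  have hback : ∀ {y x}, (y, x) ∈ E → x ∈ D → y ∉ D →
      ¬ Reachable {p ∈ SkelEdges E | p.1 ≠ p.2} D (StrongComp E y) := by
    intro y x hyx hx hy h
    have hxy : Reachable E x y := reachable_of_reachable_skelEdges hD
      (h.mono (Set.sep_subset _ _)) hx (mem_strongComp_self E y)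
    rw [eq_strongComp_of_mem hD hx] at hy
    exact hy ⟨hxy, (Reachable.refl E y).tail hyx⟩
  have hcomp : StrongComp E y = StrongComp E y' :=
    hE.isDirectedTree.eq_of_edge ⟨y, rfl⟩ ⟨y', rfl⟩ hD (hskel hyx hx hy) (hskel hyx' hx' hy')
      (hback hyx hx hy) (hback hyx' hx' hy')
  obtain ⟨hedge, hne⟩ := hskel hyx hx hy
  exact (hE.existsUnique_edge _ hedge hne).unique ⟨hyx, mem_strongComp_self E y, hx⟩
    ⟨hyx', hcomp ▸ mem_strongComp_self E y', hx'⟩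

theorem subsingleton_inNeighbors_of_not_skelLoop (hE : IsTreeOfCycles E)
    (hx : (StrongComp E x, StrongComp E x) ∉ SkelEdges E) :
    (inNeighbors E x).Subsingleton := by
  have hout : ∀ y ∈ inNeighbors E x, y ∉ StrongComp E x := fun y hyx hy =>
    hx ⟨⟨x, rfl⟩, ⟨x, rfl⟩, y, hy, x, mem_strongComp_self E x, hyx⟩
  intro y hyx y' hyx'
  exact congrArg Prod.fst <| hE.entering_edge_unique ⟨x, rfl⟩ hyx hyx' (mem_strongComp_self E x)
    (mem_strongComp_self E x) (hout y hyx) (hout y' hyx')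

theorem subsingleton_inNeighbors_of_notMem_cycSucc (hE : IsTreeOfCycles E) (hx : x ∉ CycSucc E) :
    (inNeighbors E x).Subsingleton :=
  hE.subsingleton_inNeighbors_of_not_skelLoop fun h =>
    hx (mem_cycSucc_of_skelLoop h (mem_strongComp_self E x))

theorem exists_core_edge_into (hE : IsTreeOfCycles E) (hD : (D, D) ∈ SkelEdges E) :
    ∃ y ∉ CycSucc E, ∃ x ∈ D, (y, x) ∈ E := by
  obtain ⟨C, hC, -, -, y, hy, x, hx, hyx⟩ := hE.exists_core_skelEdge D hD
  refine ⟨y, fun h => hC.2 ?_, x, hx, hyx⟩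
  rw [eq_strongComp_of_mem hC.1 hy]
  exact strongComp_mem_cycSucc h

theorem not_skelLoop_of_reachable (hE : IsTreeOfCycles E) (ha : OnCycle E a)
    (hax : Reachable E a x) (hx : x ∉ StrongComp E a) :
    (StrongComp E x, StrongComp E x) ∉ SkelEdges E := by
  intro hloop
  obtain ⟨y, hycore, x', hx', hyx'⟩ := hE.exists_core_edge_into hloop
  obtain ⟨k, w, hw⟩ := hax
  have haD : a ∉ StrongComp E x := fun h => hx ⟨h.2, h.1⟩
  obtain ⟨i, hi, hout, hin⟩ := hw.exists_step_into haD (mem_strongComp_self E x)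
  have hyD : y ∉ StrongComp E x := fun h => hycore (mem_cycSucc_of_skelLoop hloop h)
  have hentry := hE.entering_edge_unique ⟨x, rfl⟩ hyx' (hw.2.2 i hi) hx' hin hyD hout
  obtain ⟨rfl, -⟩ := Prod.mk.inj hentry
  exact hycore ⟨a, ha, hw.reachable_apply hi.le⟩

theorem subsingleton_inNeighbors_of_reachable (hE : IsTreeOfCycles E) (ha : OnCycle E a)
    (hu : u ∉ CycSucc E) (hua : (u, a) ∈ E) (hax : Reachable E a x) (hxa : x ≠ a) :
    (inNeighbors E x).Subsingleton := by
  by_cases hx : x ∈ StrongComp E a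
  · have huC := notMem_strongComp_of_notMem_cycSucc ha hu
    have hinC : inNeighbors E x ⊆ StrongComp E a := by
      intro y hyx
      by_contra hy
      exact hxa (congrArg Prod.snd
        (hE.entering_edge_unique ⟨a, rfl⟩ hyx hua hx (mem_strongComp_self E a) hy huC))
    rw [← Set.inter_eq_self_of_subset_left hinC]
    exact subsingleton_inNeighbors_inter_of_isSingleCycleOn (hE.isSingleCycleOn _ ha.skelLoop) hx
  · exact hE.subsingleton_inNeighbors_of_not_skelLoop (hE.not_skelLoop_of_reachable ha hax hx)

theorem apply_pred_eq_of_isPath (hE : IsTreeOfCycles E) {β : V} {k : ℕ} {p : ℕ → V}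
    (hβ : β ∉ StrongComp E a) (ha : OnCycle E a) (hu : u ∉ CycSucc E) (hua : (u, a) ∈ E)
    (hp : IsPath E k p β a) : p (k - 1) = u := by
  obtain ⟨i, hi, hout, hin⟩ := hp.1.exists_step_into hβ (mem_strongComp_self E a)
  have huC := notMem_strongComp_of_notMem_cycSucc ha hu
  have hentry := hE.entering_edge_unique ⟨a, rfl⟩ (hp.1.2.2 i hi) hua hin
    (mem_strongComp_self E a) hout huC
  obtain ⟨hpi, hpi'⟩ := Prod.mk.inj hentry
  have hik : i + 1 = k := hp.2 _ hi _ le_rfl (hpi'.trans hp.1.2.1.symm)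
  rwa [← hik]

theorem eq_or_eq_of_mem_inNeighbors (hE : IsTreeOfCycles E) {l : ℕ} {c : ℕ → V}
    (hc : IsCycle E l c a) (hu : u ∉ CycSucc E) (hua : (u, a) ∈ E) (hy : y ∈ inNeighbors E a) :
    y = c (l - 1) ∨ y = u := by
  have ha : OnCycle E a := ⟨l, c, hc⟩
  obtain ⟨l, rfl⟩ := Nat.exists_eq_add_of_le' hc.1
  have haC := mem_strongComp_self E a
  by_cases hyC : y ∈ StrongComp E a
  · have hcC : c l ∈ StrongComp E a :=
      ⟨hc.2.1.reachable_apply l.le_succ, hc.2.1.apply_reachable l.le_succ⟩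
    exact .inl <| subsingleton_inNeighbors_inter_of_isSingleCycleOn
      (hE.isSingleCycleOn _ ha.skelLoop) haC ⟨hy, hyC⟩ ⟨hc.2.1.last_edge, hcC⟩
  · have huC := notMem_strongComp_of_notMem_cycSucc ha hu
    exact .inr <| congrArg Prod.fst <| hE.entering_edge_unique ⟨a, rfl⟩ hy hua haC haC hyC huC

end IsTreeOfCycles

theorem stmt9_general {V : Type*} {E : Set (V × V)} (hE : IsTreeOfCycles E) {β p0 : V}
    (hβ : inNeighbors E β = ∅) {l : ℕ} {c : ℕ → V} (hcyc : IsCycle E l c p0)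
    (hp0 : ∃ u ∈ CoreOn Set.univ E, (u, p0) ∈ E)
    {kb : ℕ} {pb : ℕ → V} (hpb : IsPath E kb pb β p0) {v : V} (hv : Reachable E p0 v) :
    UniquePathFrom E p0 v ∧
    ∀ (k1 : ℕ) (p1 : ℕ → V), IsPath E k1 p1 p0 v →
      ∀ (k : ℕ) (w : ℕ → V), IsWalk E k w β v →
        ∃ m : ℕ, k = kb + m * l + k1 ∧
          ∀ t ≤ k, w t =
            if t ≤ kb then pb t
            else if t ≤ kb + m * l then c ((t - kb) % l)
            else p1 (t - (kb + m * l)) := by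
  obtain ⟨u, ⟨-, hu⟩, hup⟩ := hp0
  have hcycle : OnCycle E p0 := ⟨l, c, hcyc⟩
  have hin : ∀ x, Reachable E p0 x → x ≠ p0 → (inNeighbors E x).Subsingleton := fun x =>
    hE.subsingleton_inNeighbors_of_reachable hcycle hu hup
  have hβC : β ∉ StrongComp E p0 := fun h =>
    hβ.subset (h.1.eq_of_inNeighbors_eq_empty hβ ▸ hup)
  have hpbu : pb (kb - 1) = u := hE.apply_pred_eq_of_isPath hβC hcycle hu hup hpb
  have hinpb : ∀ t, 0 < t → t < kb → (inNeighbors E (pb t)).Subsingleton := fun t _ ht =>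
    hE.subsingleton_inNeighbors_of_notMem_cycSucc <|
      ((hpb.1.take (kb.sub_le 1)).apply_reachable (by omega)).notMem_cycSucc (hpbu ▸ hu)
  have hinp0 : ∀ y ∈ inNeighbors E p0, y = c (l - 1) ∨ y = pb (kb - 1) := fun y hy =>
    hpbu ▸ hE.eq_or_eq_of_mem_inNeighbors hcyc hu hup hy
  exact ⟨uniquePathFrom_of_subsingleton_inNeighbors hin hv, fun _ _ hp1 _ _ hw =>
    hw.exists_eq_append_cycle_pow_append hβ hcyc hpb.1 hinp0 hinpb hin hp1⟩

/-- Lemma 2 of the paper: in a reduced graph, for every node `v` in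
`V_p⁺` there is a unique path from the distinguished node `α_{p₀}` of the cycle `G_p`
to `v`, and every walk from `β` to `v` is the concatenation
`τ_{βα_{p₀}} ⬝ G_p^m ⬝ τ_{α_{p₀}v}` for some `m ∈ ℕ`; in particular its length is
`dep(v) + m·ℓ_p`. Here `c` is the cycle `G_p` (of length `l`, starting and ending at
`p0 = α_{p₀}`, with node set `C`), and `pb` is the unique path from `β` to `p0`. -/
theorem stmt9 {n : ℕ} (hn : 1 ≤ n) (E : Set (Node n × Node n))
    (hred : ReducedGraph n E)
    (C : Set (Node n)) (hC : C ∈ SkelNodes E) (hCnontriv : (C, C) ∈ SkelEdges E)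
    (l : ℕ) (c : ℕ → Node n) (p0 : Node n) (hp0C : p0 ∈ C)
    (hp0 : ∃ u ∈ CoreNodes n E, (u, p0) ∈ E)
    (hcyc : IsCycle E l c p0) (hcycset : {x | ∃ t < l, c t = x} = C)
    (kb : ℕ) (pb : ℕ → Node n) (hpb : IsPath E kb pb (none : Node n) p0) :
    ∀ v : Node n, (∃ u ∈ C, Reachable E u v) →
      UniquePathFrom E p0 v ∧
      ∀ (k1 : ℕ) (p1 : ℕ → Node n), IsPath E k1 p1 p0 v →
        ∀ (k : ℕ) (w : ℕ → Node n), IsWalk E k w (none : Node n) v →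
          ∃ m : ℕ, k = kb + m * l + k1 ∧
            ∀ t ≤ k, w t =
              if t ≤ kb then pb t
              else if t ≤ kb + m * l then c ((t - kb) % l)
              else p1 (t - (kb + m * l)) := by
  rintro v ⟨z, hzC, hzv⟩
  exact stmt9_general hred.isTreeOfCycles
    (Set.eq_empty_of_forall_notMem fun y hy => hred.1.1 _ hy rfl) hcyc hp0 hpb
    ((reachable_of_mem_skelNodes hC hp0C hzC).trans hzv)
end
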